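/- Let f=(h₀,h₁,h₂;q₀,q₁,q₂) be an admissible 6-tuple with q₀≠0, and let f′=(h₀′,h₁′,h₂′;q₀′,q₁′,q₂′) be defined by: if 0<q₀<h₀ and q₀<h₂, then (h₀′,h₁′,h₂′)=(h₀+h₁−q₀, q₀, h₂+h₁−q₀) and (q₀′,q₁′,q₂′)=(h₀+h₁+h₂−2q₀, q₀+q₁+h₁, q₀+q₂+h₁); if q₀>h₀ and q₀>h₂, then (h₀′,h₁′,h₂′)=(q₀+h₁−h₂, h₀+h₂−q₀, q₀+h₁−h₀) and (q₀′,q₁′,q₂′)=(h₁, q₀+q₁−h₂, q₀+q₂−h₀); if h₀<q₀<h₂, then (h₀′,h₁′,h₂′)=(h₁, h₀, h₁+h₂−h₀) and (q₀′,q₁′,q₂′)=(h₁+h₂−q₀, q₁, 2q₀+q₂+h₁−h₀); if h₂<q₀<h₀, then (h₀′,h₁′,h₂′)=(h₁+h₀−h₂, h₂, h₁) and (q₀′,q₁′,q₂′)=(h₁+h₀−q₀, 2q₀+q₁+h₁−h₂, q₂); in each case the qᵢ′ are reduced to their least nonnegative residues mod 2lᵢ′=h′_{i−1}+h′ᵢ.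 (These cases are exhaustive since q₀∉{0,h₀,h₂}.) Then f′ is an admissible 6-tuple. -/

import Mathlib

/-!
Common setup: 6-tuples, the coloured graph Γ(f), conditions (I)–(VI),
the maps ψ₁, ψ₂, ψ₃, σ, equivalences, traps, canonical/minimal/root tuples.
-/

namespace GMN

/-- A 6-tuple `(h₀,h₁,h₂;q₀,q₁,q₂)` of integers. -/
structure Tuple where
  h0 : ℤ
  h1 : ℤ
  h2 : ℤ
  q0 : ℤ
  q1 : ℤ
  q2 : ℤ

namespace Tuple

/-- The `h`-components indexed by `ℤ₃`. -/
def h (f : Tuple) : ZMod 3 → ℤ := fun i => if i = 0 then f.h0 else if i = 1 then f.h1 else f.h2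

/-- The `q`-components indexed by `ℤ₃`. -/
def q (f : Tuple) : ZMod 3 → ℤ := fun i => if i = 0 then f.q0 else if i = 1 then f.q1 else f.q2

/-- `2lᵢ = h_{i-1} + hᵢ`. -/
def twol (f : Tuple) (i : ZMod 3) : ℤ := f.h (i - 1) + f.h i

end Tuple

/-- Condition (I): all `hᵢ` positive. -/
def CondI (f : Tuple) : Prop := ∀ i, 0 < f.h i

/-- Condition (II): all `hᵢ` of the same parity. -/
def CondII (f : Tuple) : Prop := ∀ i j, f.h i % 2 = f.h j % 2

/-- Condition (III): `0 ≤ qᵢ < 2lᵢ`. -/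
def CondIII (f : Tuple) : Prop := ∀ i, 0 ≤ f.q i ∧ f.q i < f.twol i

/-- Condition (IV): all `qᵢ` of the same parity. -/
def CondIV (f : Tuple) : Prop := ∀ i j, f.q i % 2 = f.q j % 2

/-- Conditions (I)–(IV) together. -/
def CondsI_IV (f : Tuple) : Prop := CondI f ∧ CondII f ∧ CondIII f ∧ CondIV f

/-- Condition (V): `hᵢ + qᵢ` odd. -/
def CondV (f : Tuple) : Prop := ∀ i, (f.h i + f.q i) % 2 = 1

/-- The vertex set `V(f) = ⋃ᵢ {i} × ℤ_{2lᵢ}`, with second coordinates as least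
nonnegative residues. -/
def Vtx (f : Tuple) : Set (ZMod 3 × ℤ) := {p | 0 ≤ p.2 ∧ p.2 < f.twol p.1}

/-- `ι₀(i,j) = (i, j + (−1)^j)`, second coordinate mod `2lᵢ`. -/
def iota0 (f : Tuple) (p : ZMod 3 × ℤ) : ZMod 3 × ℤ :=
  (p.1, (if p.2 % 2 = 0 then p.2 + 1 else p.2 - 1) % f.twol p.1)

/-- `ι₁(i,j) = (i, j − (−1)^j)`, second coordinate mod `2lᵢ`. -/
def iota1 (f : Tuple) (p : ZMod 3 × ℤ) : ZMod 3 × ℤ :=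
  (p.1, (if p.2 % 2 = 0 then p.2 - 1 else p.2 + 1) % f.twol p.1)

/-- `ι₂(i,j) = (i+1, −j−1)` if `0 ≤ j ≤ hᵢ−1`, and `(i−1, 2lᵢ−j−1)` if `hᵢ ≤ j ≤ 2lᵢ−1`. -/
def iota2 (f : Tuple) (p : ZMod 3 × ℤ) : ZMod 3 × ℤ :=
  if p.2 < f.h p.1 then (p.1 + 1, (-p.2 - 1) % f.twol (p.1 + 1))
  else (p.1 - 1, (f.twol p.1 - p.2 - 1) % f.twol (p.1 - 1))

/-- `ρ(i,j) = (i, j + qᵢ)`. -/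
def rho (f : Tuple) (p : ZMod 3 × ℤ) : ZMod 3 × ℤ :=
  (p.1, (p.2 + f.q p.1) % f.twol p.1)

/-- `ρ⁻¹(i,j) = (i, j − qᵢ)`. -/
def rhoInv (f : Tuple) (p : ZMod 3 × ℤ) : ZMod 3 × ℤ :=
  (p.1, (p.2 - f.q p.1) % f.twol p.1)

/-- `ι₃ = ρ ∘ ι₂ ∘ ρ⁻¹`. -/
def iota3 (f : Tuple) : ZMod 3 × ℤ → ZMod 3 × ℤ :=
  rho f ∘ iota2 f ∘ rhoInv f

/-- The four involutions of `Γ(f)`, indexed by the colour `c ∈ {0,1,2,3}`. -/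
def iota (f : Tuple) : Fin 4 → ZMod 3 × ℤ → ZMod 3 × ℤ
  | 0 => iota0 f
  | 1 => iota1 f
  | 2 => iota2 f
  | 3 => iota3 f

/-- One step along an edge of `Γ(f)` whose colour lies in `S`, within `V(f)`. -/
def Step (f : Tuple) (S : Set (Fin 4)) (a b : ZMod 3 × ℤ) : Prop :=
  a ∈ Vtx f ∧ b ∈ Vtx f ∧ ∃ c ∈ S, b = iota f c a

/-- The orbit relation on `V(f)` of the subgroup generated by the involutions with
colours in `S` (the `S`-residue relation). -/
def OrbRel (f : Tuple) (S : Set (Fin 4)) : ZMod 3 × ℤ → ZMod 3 × ℤ → Prop :=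
  Relation.EqvGen (Step f S)

/-- The subgroup generated by the colours in `S` has exactly three orbits on `V(f)`. -/
def ThreeOrbits (f : Tuple) (S : Set (Fin 4)) : Prop :=
  ∃ a b c, a ∈ Vtx f ∧ b ∈ Vtx f ∧ c ∈ Vtx f ∧
    ¬ OrbRel f S a b ∧ ¬ OrbRel f S a c ∧ ¬ OrbRel f S b c ∧
    ∀ v ∈ Vtx f, OrbRel f S a v ∨ OrbRel f S b v ∨ OrbRel f S c v

/-- Admissibility: conditions (I)–(IV), (V), and (VI) (three `{2,3}`-residues). -/
def Admissible (f : Tuple) : Prop :=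
  CondsI_IV f ∧ CondV f ∧ ThreeOrbits f {2, 3}

/-- `ψ₁(h₀,h₁,h₂;q₀,q₁,q₂) = (h₁,h₂,h₀;q₁,q₂,q₀)`. -/
def psi1 (f : Tuple) : Tuple := ⟨f.h1, f.h2, f.h0, f.q1, f.q2, f.q0⟩

/-- `ψ₂(h₀,h₁,h₂;q₀,q₁,q₂) = (h₂,h₁,h₀;q₀,q₂,q₁)`. -/
def psi2 (f : Tuple) : Tuple := ⟨f.h2, f.h1, f.h0, f.q0, f.q2, f.q1⟩

/-- `ψ₃(h₀,h₁,h₂;q₀,q₁,q₂) = (h₀,h₁,h₂;−q₀,−q₁,−q₂)`, the `q`-entries reduced to their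
least nonnegative residues mod the respective `2lᵢ`. -/
def psi3 (f : Tuple) : Tuple :=
  ⟨f.h0, f.h1, f.h2,
    (-f.q0) % (f.h2 + f.h0), (-f.q1) % (f.h0 + f.h1), (-f.q2) % (f.h1 + f.h2)⟩

/-- The 2-symmetric transformation `σ`, with the `q′`-entries reduced to their least
nonnegative residues mod the respective `2lᵢ′ = h′_{i−1} + h′ᵢ`. -/
def sigma (f : Tuple) : Tuple :=
  if f.q0 = 0 then f
  else if f.q0 < f.h0 ∧ f.q0 < f.h2 then
    ⟨f.h0 + f.h1 - f.q0, f.q0, f.h2 + f.h1 - f.q0,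
      (f.h0 + f.h1 + f.h2 - 2 * f.q0) % ((f.h2 + f.h1 - f.q0) + (f.h0 + f.h1 - f.q0)),
      (f.q0 + f.q1 + f.h1) % ((f.h0 + f.h1 - f.q0) + f.q0),
      (f.q0 + f.q2 + f.h1) % (f.q0 + (f.h2 + f.h1 - f.q0))⟩
  else if f.h0 < f.q0 ∧ f.h2 < f.q0 then
    ⟨f.q0 + f.h1 - f.h2, f.h0 + f.h2 - f.q0, f.q0 + f.h1 - f.h0,
      f.h1 % ((f.q0 + f.h1 - f.h0) + (f.q0 + f.h1 - f.h2)),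
      (f.q0 + f.q1 - f.h2) % ((f.q0 + f.h1 - f.h2) + (f.h0 + f.h2 - f.q0)),
      (f.q0 + f.q2 - f.h0) % ((f.h0 + f.h2 - f.q0) + (f.q0 + f.h1 - f.h0))⟩
  else if f.q0 < f.h2 then
    ⟨f.h1, f.h0, f.h1 + f.h2 - f.h0,
      (f.h1 + f.h2 - f.q0) % ((f.h1 + f.h2 - f.h0) + f.h1),
      f.q1 % (f.h1 + f.h0),
      (2 * f.q0 + f.q2 + f.h1 - f.h0) % (f.h0 + (f.h1 + f.h2 - f.h0))⟩
  else
    ⟨f.h1 + f.h0 - f.h2, f.h2, f.h1,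
      (f.h1 + f.h0 - f.q0) % (f.h1 + (f.h1 + f.h0 - f.h2)),
      (2 * f.q0 + f.q1 + f.h1 - f.h2) % ((f.h1 + f.h0 - f.h2) + f.h2),
      f.q2 % (f.h2 + f.h1)⟩

/-- The complexity `ν(f) = h₀ + h₁ + h₂`. -/
def nu (f : Tuple) : ℤ := f.h0 + f.h1 + f.h2

/-- `δ(f) = ν(σ(f)) − ν(f)`. -/
def delta (f : Tuple) : ℤ := nu (sigma f) - nu f

/-- One step of the action of a generator of `H` on admissible 6-tuples. -/
def HStep (a b : Tuple) : Prop :=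
  Admissible a ∧ Admissible b ∧ (b = psi1 a ∨ b = psi2 a ∨ b = psi3 a)

/-- `H`-equivalence: the orbit relation of `H = ⟨ψ₁,ψ₂,ψ₃⟩` on `ℱ`. -/
def HEquiv : Tuple → Tuple → Prop := Relation.EqvGen HStep

/-- One step of the action of a generator of `H′` on admissible 6-tuples. -/
def H'Step (a b : Tuple) : Prop :=
  Admissible a ∧ Admissible b ∧ (b = psi2 a ∨ b = psi3 a)

/-- `H′`-equivalence: the orbit relation of `H′ = ⟨ψ₂,ψ₃⟩` on `ℱ`. -/
def H'Equiv : Tuple → Tuple → Prop := Relation.EqvGen H'Step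

/-- One step of the action of a generator of `G` on admissible 6-tuples. -/
def GStep (a b : Tuple) : Prop :=
  Admissible a ∧ Admissible b ∧ (b = psi1 a ∨ b = psi2 a ∨ b = psi3 a ∨ b = sigma a)

/-- `G`-equivalence: the orbit relation of `G = ⟨ψ₁,ψ₂,ψ₃,σ⟩` on `ℱ`. -/
def GEquiv : Tuple → Tuple → Prop := Relation.EqvGen GStep

/-- Membership in the set `{0, r+1, r+2, …, s−1}`. -/
def inT (r s x : ℤ) : Prop := x = 0 ∨ (r < x ∧ x < s)

/-- A trap of type `(r,s)`: `H`-equivalent to an admissible `(r,r,s;q₀,0,q₂)` with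
`q₀+k(q₀+q₂), q₂+k(q₀+q₂) ∈ {0,r+1,…,s−1} (mod r+s)` for all `k ≥ 0`. -/
def IsTrapOfType (r s : ℤ) (f : Tuple) : Prop :=
  ∃ g : Tuple, Admissible g ∧ HEquiv f g ∧
    g.h0 = r ∧ g.h1 = r ∧ g.h2 = s ∧ g.q1 = 0 ∧
    ∀ k : ℕ, inT r s ((g.q0 + (k : ℤ) * (g.q0 + g.q2)) % (r + s)) ∧
             inT r s ((g.q2 + (k : ℤ) * (g.q0 + g.q2)) % (r + s))

/-- A trap: a trap of some type `(r,s)` with `0 < r ≤ s`. -/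
def IsTrap (f : Tuple) : Prop := ∃ r s : ℤ, 0 < r ∧ r ≤ s ∧ IsTrapOfType r s f

/-- The canonical representative conditions (a)–(i) (together with admissibility). -/
def Canonical (f : Tuple) : Prop :=
  Admissible f ∧
  (f.h0 ≤ f.h1 ∧ f.h1 ≤ f.h2) ∧
  (2 * f.q0 ≤ f.h2 + f.h0) ∧
  ((f.q0 = 0 ∨ 2 * f.q0 = f.h2 + f.h0) → 2 * f.q1 ≤ f.h0 + f.h1) ∧
  ((f.q0 = 0 ∨ 2 * f.q0 = f.h2 + f.h0) → (f.q1 = 0 ∨ 2 * f.q1 = f.h0 + f.h1) →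
    2 * f.q2 ≤ f.h1 + f.h2) ∧
  (f.h0 = f.h1 → f.q0 ≤ f.q2 ∧ f.q2 ≤ (-f.q0) % (f.h2 + f.h0)) ∧
  (f.h0 = f.h1 → (f.q2 = f.q0 ∨ f.q2 = (-f.q0) % (f.h2 + f.h0)) → f.q1 ≤ f.h1) ∧
  (f.h1 = f.h2 → f.q0 ≤ f.q1 ∧ f.q1 ≤ (-f.q0) % (f.h2 + f.h0)) ∧
  (f.h1 = f.h2 → (f.q1 = f.q0 ∨ f.q1 = (-f.q0) % (f.h2 + f.h0)) → f.q2 ≤ f.h2) ∧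
  (f.h0 = f.h1 ∧ f.h1 = f.h2 → f.q1 ≤ f.q2)

/-- A canonical 6-tuple is minimal if its complexity is minimal in its `G`-orbit. -/
def Minimal (f : Tuple) : Prop :=
  Canonical f ∧ ∀ g, GEquiv f g → nu f ≤ nu g

/-- A canonical 6-tuple is a root if every `G`-equivalent but not `H`-equivalent
6-tuple has strictly larger complexity. -/
def Root (f : Tuple) : Prop :=
  Canonical f ∧ ∀ g, GEquiv f g → ¬ HEquiv f g → nu f < nu g

/-- A colour-preserving isomorphism between `Γ(f)` and `Γ(f′)`. -/
def CPIso (f f' : Tuple) : Prop :=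
  ∃ φ : ZMod 3 × ℤ → ZMod 3 × ℤ, Set.BijOn φ (Vtx f) (Vtx f') ∧
    ∀ c : Fin 4, ∀ v ∈ Vtx f, φ (iota f c v) = iota f' c (φ v)

/-- The set of admissible 6-tuples, as a type. -/
abbrev AdmTuple := {f : Tuple // Admissible f}

/-! ### Counting classes of an equivalence relation -/

/-- `r` has exactly three classes on `s`. -/
def ThreeClasses {α : Type*} (s : Set α) (r : α → α → Prop) : Prop :=
  ∃ a b c, a ∈ s ∧ b ∈ s ∧ c ∈ s ∧ ¬ r a b ∧ ¬ r a c ∧ ¬ r b c ∧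
    ∀ v ∈ s, r a v ∨ r b v ∨ r c v

/-- Having three classes passes along a map which is injective and surjective on classes. -/
theorem ThreeClasses.transfer {α β : Type*} {s : Set α} {t : Set β} {r : α → α → Prop}
    {r' : β → β → Prop} (hr : Equivalence r) (hr' : Equivalence r') (φ : α → β) (ψ : β → α)
    (hφs : ∀ a ∈ s, φ a ∈ t) (hφ : ∀ a b, r a b → r' (φ a) (φ b))
    (hψ : ∀ a b, r' a b → r (ψ a) (ψ b)) (hψφ : ∀ a ∈ s, r (ψ (φ a)) a)
    (hsurj : ∀ b ∈ t, ∃ a ∈ s, r' (φ a) b) (h : ThreeClasses s r) : ThreeClasses t r' := by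
  obtain ⟨a, b, c, ha, hb, hc, hab, hac, hbc, hall⟩ := h
  have inj : ∀ x ∈ s, ∀ y ∈ s, r' (φ x) (φ y) → r x y := fun x hx y hy hxy =>
    hr.trans (hr.symm (hψφ x hx)) (hr.trans (hψ _ _ hxy) (hψφ y hy))
  refine ⟨φ a, φ b, φ c, hφs a ha, hφs b hb, hφs c hc, fun h => hab (inj a ha b hb h),
    fun h => hac (inj a ha c hc h), fun h => hbc (inj b hb c hc h), fun v hv => ?_⟩
  obtain ⟨w, hw, hwv⟩ := hsurj v hv
  rcases hall w hw with h | h | h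
  · exact Or.inl (hr'.trans (hφ _ _ h) hwv)
  · exact Or.inr (Or.inl (hr'.trans (hφ _ _ h) hwv))
  · exact Or.inr (Or.inr (hr'.trans (hφ _ _ h) hwv))

/-! ### The `{2,3}`-residues on integer labels -/

/-- The arcs of colours 2 and 3 on `ℤ₃ × ℤ`, where the second coordinate is an arbitrary
integer representing its residue mod `2lᵢ`. -/
inductive Arc (f : Tuple) : ZMod 3 × ℤ → ZMod 3 × ℤ → Prop
  | period (i : ZMod 3) (j : ℤ) : Arc f (i, j) (i, j + f.twol i)
  | two (i : ZMod 3) (j : ℤ) (h0 : 0 ≤ j) (h1 : j < f.h i) : Arc f (i, j) (i + 1, -j - 1)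
  | three (i : ZMod 3) (j : ℤ) (h0 : 0 ≤ j) (h1 : j < f.h i) :
      Arc f (i, j + f.q i) (i + 1, -j - 1 + f.q (i + 1))

/-- The equivalence relation on `ℤ₃ × ℤ` generated by the arcs. -/
def Linked (f : Tuple) : ZMod 3 × ℤ → ZMod 3 × ℤ → Prop := Relation.EqvGen (Arc f)

theorem linked_equivalence (f : Tuple) : Equivalence (Linked f) :=
  Relation.EqvGen.is_equivalence _

theorem orbRel_equivalence (f : Tuple) (S : Set (Fin 4)) : Equivalence (OrbRel f S) :=
  Relation.EqvGen.is_equivalence _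

theorem eqvGen_lift {α β : Type*} {r : α → α → Prop} {r' : β → β → Prop} (hr' : Equivalence r')
    (φ : α → β) (h : ∀ a b, r a b → r' (φ a) (φ b)) {a b : α} (hab : Relation.EqvGen r a b) :
    r' (φ a) (φ b) := by
  induction hab with
  | rel x y h' => exact h x y h'
  | refl x => exact hr'.refl _
  | symm x y _ ih => exact hr'.symm ih
  | trans x y z _ _ ih ih' => exact hr'.trans ih ih'

namespace Linked

variable {f : Tuple} {a b c : ZMod 3 × ℤ}

theorem refl (a : ZMod 3 × ℤ) : Linked f a a := Relation.EqvGen.refl a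

theorem symm (h : Linked f a b) : Linked f b a := Relation.EqvGen.symm _ _ h

theorem trans (h : Linked f a b) (h' : Linked f b c) : Linked f a c :=
  Relation.EqvGen.trans _ _ _ h h'

theorem add_mul (i : ZMod 3) (x m : ℤ) : Linked f (i, x) (i, x + m * f.twol i) := by
  induction m with
  | zero => simpa using refl _
  | succ n ih =>
    refine ih.trans ?_
    have := Relation.EqvGen.rel _ _ (Arc.period (f := f) i (x + n * f.twol i))
    rwa [show x + n * f.twol i + f.twol i = x + ((n : ℤ) + 1) * f.twol i by ring] at this
  | pred n ih =>
    refine ih.trans (symm ?_)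
    have := Relation.EqvGen.rel _ _ (Arc.period (f := f) i (x + (-(n : ℤ) - 1) * f.twol i))
    rwa [show x + (-(n : ℤ) - 1) * f.twol i + f.twol i = x + -(n : ℤ) * f.twol i by ring] at this

theorem of_eq_add_mul {i : ZMod 3} {x y : ℤ} (m : ℤ) (h : y = x + m * f.twol i) :
    Linked f (i, x) (i, y) := h ▸ add_mul i x m

theorem emod (i : ZMod 3) (x : ℤ) : Linked f (i, x) (i, x % f.twol i) := by
  refine of_eq_add_mul (-(x / f.twol i)) ?_
  rw [Int.emod_def]; ring

end Linked

theorem twol_pos {f : Tuple} (hI : CondI f) (i : ZMod 3) : 0 < f.twol i :=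
  add_pos (hI _) (hI _)

/-- Replacement of the second coordinate by its least nonnegative residue. -/
def red (f : Tuple) (p : ZMod 3 × ℤ) : ZMod 3 × ℤ := (p.1, p.2 % f.twol p.1)

theorem red_mem {f : Tuple} (hI : CondI f) (p : ZMod 3 × ℤ) : red f p ∈ Vtx f :=
  ⟨Int.emod_nonneg _ (twol_pos hI _).ne', Int.emod_lt_of_pos _ (twol_pos hI _)⟩

theorem red_of_mem {f : Tuple} {p : ZMod 3 × ℤ} (hp : p ∈ Vtx f) : red f p = p :=
  Prod.ext rfl (Int.emod_eq_of_lt hp.1 hp.2)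

theorem linked_red (f : Tuple) (p : ZMod 3 × ℤ) : Linked f p (red f p) := Linked.emod _ _

/-- Either `p` is the tail of an arc ending at the label of `ι₂ p`, or conversely. -/
theorem iota2_cases {f : Tuple} {p : ZMod 3 × ℤ} (hp : p ∈ Vtx f) :
    (∃ i j, 0 ≤ j ∧ j < f.h i ∧ p = (i, j) ∧ iota2 f p = red f (i + 1, -j - 1)) ∨
    ∃ i j, 0 ≤ j ∧ j < f.h i ∧ p = red f (i + 1, -j - 1) ∧ iota2 f p = red f (i, j) := by
  obtain ⟨i, j⟩ := p
  obtain ⟨h0, h1⟩ := hp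
  dsimp only at h0 h1
  by_cases hj : j < f.h i
  · exact Or.inl ⟨i, j, h0, hj, rfl, by simp [iota2, hj, red]⟩
  · refine Or.inr ⟨i - 1, f.twol i - j - 1, by omega, ?_, ?_, ?_⟩
    · simp only [Tuple.twol] at h1 ⊢
      omega
    · simp only [red, sub_add_cancel]
      rw [show -(f.twol i - j - 1) - 1 = j + (-1) * f.twol i by ring, Int.add_mul_emod_self_right,
        Int.emod_eq_of_lt h0 h1]
    · simp [iota2, hj, red]

theorem rho_red (f : Tuple) (i : ZMod 3) (x : ℤ) :
    rho f (red f (i, x)) = red f (i, x + f.q i) := by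
  simp [rho, red]

theorem rho_rhoInv {f : Tuple} {p : ZMod 3 × ℤ} (hp : p ∈ Vtx f) : rho f (rhoInv f p) = p := by
  conv_rhs => rw [← red_of_mem hp]
  simp [rho, rhoInv, red]

theorem rhoInv_red (f : Tuple) (i : ZMod 3) (x : ℤ) :
    rhoInv f (red f (i, x)) = red f (i, x - f.q i) := by
  simp [rhoInv, red]

theorem linked_iota2 {f : Tuple} {p : ZMod 3 × ℤ} (hp : p ∈ Vtx f) :
    Linked f p (iota2 f p) := by
  rcases iota2_cases hp with ⟨i, j, h0, h1, hpe, he⟩ | ⟨i, j, h0, h1, hpe, he⟩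
  · rw [he, hpe]
    exact Linked.trans (.rel _ _ (.two i j h0 h1)) (linked_red _ _)
  · rw [he, hpe]
    exact (linked_red _ _).symm.trans
      (Linked.trans (Linked.symm (.rel _ _ (.two i j h0 h1))) (linked_red _ _))

theorem linked_iota3 {f : Tuple} (hI : CondI f) {p : ZMod 3 × ℤ} (hp : p ∈ Vtx f) :
    Linked f p (iota3 f p) := by
  have hv : rhoInv f p ∈ Vtx f := by
    rw [← red_of_mem hp, rhoInv_red]
    exact red_mem hI _
  conv_lhs => rw [← rho_rhoInv hp]
  simp only [iota3, Function.comp]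
  rcases iota2_cases hv with ⟨i, j, h0, h1, hpe, he⟩ | ⟨i, j, h0, h1, hpe, he⟩
  · rw [he, rho_red]
    rw [hpe] at hv ⊢
    rw [← red_of_mem hv, rho_red]
    exact (linked_red _ _).symm.trans
      (Linked.trans (.rel _ _ (.three i j h0 h1)) (linked_red _ _))
  · rw [he, hpe, rho_red, rho_red]
    exact (linked_red _ _).symm.trans
      (Linked.trans (Linked.symm (.rel _ _ (.three i j h0 h1))) (linked_red _ _))

theorem OrbRel.linked {f : Tuple} (hI : CondI f) {a b : ZMod 3 × ℤ}
    (h : OrbRel f {2, 3} a b) : Linked f a b := by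
  refine eqvGen_lift (linked_equivalence f) id ?_ h
  rintro a b ⟨ha, -, c, hc | hc, rfl⟩
  · subst hc
    exact linked_iota2 ha
  · obtain rfl : c = 3 := hc
    exact linked_iota3 hI ha

theorem Linked.orbRel {f : Tuple} (hI : CondI f) {a b : ZMod 3 × ℤ} (h : Linked f a b) :
    OrbRel f {2, 3} (red f a) (red f b) := by
  refine eqvGen_lift (orbRel_equivalence f _) (red f) ?_ h
  have self : ∀ {i j}, 0 ≤ j → j < f.h i → red f (i, j) = (i, j) := fun {i j} h0 h1 =>
    red_of_mem ⟨h0, lt_of_lt_of_le h1 (le_add_of_nonneg_left (hI _).le)⟩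
  rintro _ _ (⟨i, j⟩ | ⟨i, j, h0, h1⟩ | ⟨i, j, h0, h1⟩)
  · simpa [red] using (orbRel_equivalence f _).refl _
  · refine .rel _ _ ⟨red_mem hI _, red_mem hI _, 2, by simp, ?_⟩
    rw [self h0 h1]
    simp [iota, iota2, h1, red]
  · refine .rel _ _ ⟨red_mem hI _, red_mem hI _, 3, by simp, ?_⟩
    simp only [iota, iota3, Function.comp]
    rw [rhoInv_red, add_sub_cancel_right, self h0 h1, ← rho_red]
    simp [iota2, h1, red]

theorem threeOrbits_iff {f : Tuple} (hI : CondI f) :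
    ThreeOrbits f {2, 3} ↔ ThreeClasses Set.univ (Linked f) := by
  constructor
  · exact ThreeClasses.transfer (orbRel_equivalence f _) (linked_equivalence f) id (red f)
      (fun _ _ => Set.mem_univ _) (fun _ _ h => h.linked hI) (fun _ _ h => h.orbRel hI)
      (fun a ha => by rw [id, red_of_mem ha]; exact (orbRel_equivalence f _).refl _)
      (fun b _ => ⟨red f b, red_mem hI b, (linked_red f b).symm⟩)
  · exact ThreeClasses.transfer (linked_equivalence f) (orbRel_equivalence f _) (red f) id
      (fun a _ => red_mem hI a) (fun _ _ h => h.orbRel hI) (fun _ _ h => h.linked hI)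
      (fun a _ => (linked_red f a).symm)
      (fun b hb => ⟨b, Set.mem_univ b, by
        rw [red_of_mem hb]; exact (orbRel_equivalence f _).refl _⟩)

/-- `Linked` depends on the `qᵢ` only through their residues mod `2lᵢ`. -/
theorem Linked.congr_q {f g : Tuple} (hh : f.h = g.h)
    (hq : ∀ i, ∃ m, g.q i = f.q i + m * f.twol i) {a b : ZMod 3 × ℤ} (hab : Linked f a b) :
    Linked g a b := by
  have ht : f.twol = g.twol := by
    funext i
    simp [Tuple.twol, hh]
  refine eqvGen_lift (linked_equivalence g) id ?_ hab
  rintro _ _ (⟨i, j⟩ | ⟨i, j, h0, h1⟩ | ⟨i, j, h0, h1⟩)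
  · rw [ht]
    exact .rel _ _ (.period i j)
  · rw [hh] at h1
    exact .rel _ _ (.two i j h0 h1)
  · rw [hh] at h1
    obtain ⟨m, hm⟩ := hq i
    obtain ⟨n, hn⟩ := hq (i + 1)
    rw [ht] at hm hn
    exact (Linked.of_eq_add_mul m (by rw [hm]; ring)).trans
      (Linked.trans (.rel _ _ (.three i j h0 h1)) (Linked.of_eq_add_mul (-n) (by rw [hn]; ring)))

/-! ### Paths between labels on the circles `1` and `2` -/

section Coordinates

variable (f : Tuple)

theorem h_zero : f.h 0 = f.h0 := rfl
theorem h_one : f.h 1 = f.h1 := rfl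
theorem h_two : f.h 2 = f.h2 := rfl
theorem q_zero : f.q 0 = f.q0 := rfl
theorem q_one : f.q 1 = f.q1 := rfl
theorem q_two : f.q 2 = f.q2 := rfl
theorem twol_zero : f.twol 0 = f.h2 + f.h0 := rfl
theorem twol_one : f.twol 1 = f.h0 + f.h1 := rfl
theorem twol_two : f.twol 2 = f.h1 + f.h2 := rfl

end Coordinates

theorem forall_zmod_three {P : ZMod 3 → Prop} (h0 : P 0) (h1 : P 1) (h2 : P 2) : ∀ i, P i := by
  intro i
  fin_cases i
  exacts [h0, h1, h2]

namespace Linked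

variable {f : Tuple} {u v : ℤ}

theorem shift_zero (m : ℤ) (h : v = u + m * (f.h2 + f.h0)) : Linked f (0, u) (0, v) :=
  of_eq_add_mul m h

theorem shift_one (m : ℤ) (h : v = u + m * (f.h0 + f.h1)) : Linked f (1, u) (1, v) :=
  of_eq_add_mul m h

theorem shift_two (m : ℤ) (h : v = u + m * (f.h1 + f.h2)) : Linked f (2, u) (2, v) :=
  of_eq_add_mul m h

theorem two_one_zero (a : ℤ) (h : 0 ≤ -u - 1 + a * (f.h0 + f.h1))
    (h' : -u - 1 + a * (f.h0 + f.h1) < f.h0) :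
    Linked f (1, u) (0, -u - 1 + a * (f.h0 + f.h1)) :=
  (shift_one (-a) (by ring)).trans (Linked.symm (.rel _ _ (.two 0 _ h h')))

theorem three_one_zero (a : ℤ) (h : 0 ≤ -u + f.q1 - 1 + a * (f.h0 + f.h1))
    (h' : -u + f.q1 - 1 + a * (f.h0 + f.h1) < f.h0) :
    Linked f (1, u) (0, -u + f.q1 - 1 + a * (f.h0 + f.h1) + f.q0) :=
  (shift_one (-a) (by rw [zero_add, q_one]; ring)).trans
    (Linked.symm (.rel _ _ (.three 0 _ h h')))

theorem two_two_zero (a : ℤ) (h : 0 ≤ u + a * (f.h1 + f.h2))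
    (h' : u + a * (f.h1 + f.h2) < f.h2) :
    Linked f (2, u) (0, -(u + a * (f.h1 + f.h2)) - 1) :=
  (shift_two a rfl).trans (.rel _ _ (.two 2 _ h h'))

theorem three_two_zero (a : ℤ) (h : 0 ≤ u - f.q2 + a * (f.h1 + f.h2))
    (h' : u - f.q2 + a * (f.h1 + f.h2) < f.h2) :
    Linked f (2, u) (0, -(u - f.q2 + a * (f.h1 + f.h2)) - 1 + f.q0) :=
  (shift_two a (by rw [q_two]; ring)).trans (.rel _ _ (.three 2 _ h h'))

theorem two_one_two (a b : ℤ) (h : 0 ≤ u + a * (f.h0 + f.h1)) (h' : u + a * (f.h0 + f.h1) < f.h1)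
    (hv : v = -(u + a * (f.h0 + f.h1)) - 1 + b * (f.h1 + f.h2)) : Linked f (1, u) (2, v) :=
  (shift_one a rfl).trans (Linked.trans (.rel _ _ (.two 1 _ h h')) (shift_two b hv))

theorem three_one_two (a b : ℤ) (h : 0 ≤ u - f.q1 + a * (f.h0 + f.h1))
    (h' : u - f.q1 + a * (f.h0 + f.h1) < f.h1)
    (hv : v = -(u - f.q1 + a * (f.h0 + f.h1)) - 1 + f.q2 + b * (f.h1 + f.h2)) :
    Linked f (1, u) (2, v) :=
  (shift_one a (by rw [q_one]; ring)).trans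
    (Linked.trans (.rel _ _ (.three 1 _ h h')) (shift_two b hv))

/-! The next lemmas are paths through the circle `0`, named after the colours at their ends. -/

theorem via_two_three (a b c : ℤ)
    (hu : 0 ≤ -u - 1 + a * (f.h0 + f.h1)) (hu' : -u - 1 + a * (f.h0 + f.h1) < f.h0)
    (hv : 0 ≤ v - f.q2 + b * (f.h1 + f.h2)) (hv' : v - f.q2 + b * (f.h1 + f.h2) < f.h2)
    (h : -u - 1 + a * (f.h0 + f.h1) =
      -(v - f.q2 + b * (f.h1 + f.h2)) - 1 + f.q0 + c * (f.h2 + f.h0)) :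
    Linked f (1, u) (2, v) :=
  (two_one_zero a hu hu').trans ((three_two_zero b hv hv').trans (shift_zero c h)).symm

theorem via_three_two (a b c : ℤ)
    (hu : 0 ≤ -u + f.q1 - 1 + a * (f.h0 + f.h1))
    (hu' : -u + f.q1 - 1 + a * (f.h0 + f.h1) < f.h0)
    (hv : 0 ≤ v + b * (f.h1 + f.h2)) (hv' : v + b * (f.h1 + f.h2) < f.h2)
    (h : -u + f.q1 - 1 + a * (f.h0 + f.h1) + f.q0 =
      -(v + b * (f.h1 + f.h2)) - 1 + c * (f.h2 + f.h0)) :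
    Linked f (1, u) (2, v) :=
  (three_one_zero a hu hu').trans ((two_two_zero b hv hv').trans (shift_zero c h)).symm

theorem via_one_one (a b c : ℤ)
    (hu : 0 ≤ -u - 1 + a * (f.h0 + f.h1)) (hu' : -u - 1 + a * (f.h0 + f.h1) < f.h0)
    (hv : 0 ≤ -v + f.q1 - 1 + b * (f.h0 + f.h1))
    (hv' : -v + f.q1 - 1 + b * (f.h0 + f.h1) < f.h0)
    (h : -u - 1 + a * (f.h0 + f.h1) =
      -v + f.q1 - 1 + b * (f.h0 + f.h1) + f.q0 + c * (f.h2 + f.h0)) :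
    Linked f (1, u) (1, v) :=
  (two_one_zero a hu hu').trans ((three_one_zero b hv hv').trans (shift_zero c h)).symm

theorem via_two_two (a b c : ℤ)
    (hu : 0 ≤ u + a * (f.h1 + f.h2)) (hu' : u + a * (f.h1 + f.h2) < f.h2)
    (hv : 0 ≤ v - f.q2 + b * (f.h1 + f.h2)) (hv' : v - f.q2 + b * (f.h1 + f.h2) < f.h2)
    (h : -(u + a * (f.h1 + f.h2)) - 1 =
      -(v - f.q2 + b * (f.h1 + f.h2)) - 1 + f.q0 + c * (f.h2 + f.h0)) :
    Linked f (2, u) (2, v) :=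
  (two_two_zero a hu hu').trans ((three_two_zero b hv hv').trans (shift_zero c h)).symm

end Linked

/-! ### The change of coordinates -/

/-- The transformation `σ` before reduction of the `q′`-entries. -/
def sigmaRaw (f : Tuple) : Tuple :=
  if f.q0 < f.h0 ∧ f.q0 < f.h2 then
    ⟨f.h0 + f.h1 - f.q0, f.q0, f.h2 + f.h1 - f.q0,
      f.h0 + f.h1 + f.h2 - 2 * f.q0, f.q0 + f.q1 + f.h1, f.q0 + f.q2 + f.h1⟩
  else if f.h0 < f.q0 ∧ f.h2 < f.q0 then
    ⟨f.q0 + f.h1 - f.h2, f.h0 + f.h2 - f.q0, f.q0 + f.h1 - f.h0,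
      f.h1, f.q0 + f.q1 - f.h2, f.q0 + f.q2 - f.h0⟩
  else if f.q0 < f.h2 then
    ⟨f.h1, f.h0, f.h1 + f.h2 - f.h0, f.h1 + f.h2 - f.q0, f.q1,
      2 * f.q0 + f.q2 + f.h1 - f.h0⟩
  else
    ⟨f.h1 + f.h0 - f.h2, f.h2, f.h1, f.h1 + f.h0 - f.q0,
      2 * f.q0 + f.q1 + f.h1 - f.h2, f.q2⟩

/-- The 6-tuple with the `q`-entries replaced by their least nonnegative residues. -/
def reduceQ (f : Tuple) : Tuple :=
  ⟨f.h0, f.h1, f.h2, f.q0 % (f.h2 + f.h0), f.q1 % (f.h0 + f.h1), f.q2 % (f.h1 + f.h2)⟩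

theorem sigma_eq_reduceQ {f : Tuple} (hq0 : f.q0 ≠ 0) : sigma f = reduceQ (sigmaRaw f) := by
  unfold sigma sigmaRaw
  rw [if_neg hq0]
  split_ifs <;> rfl

/-- The part of admissibility on which the transformation of labels relies. -/
structure Generic (f : Tuple) : Prop where
  h0_pos : 0 < f.h0
  h1_pos : 0 < f.h1
  h2_pos : 0 < f.h2
  q0_pos : 0 < f.q0
  q0_lt : f.q0 < f.h2 + f.h0
  q0_ne_h0 : f.q0 ≠ f.h0
  q0_ne_h2 : f.q0 ≠ f.h2

theorem Generic.condI {f : Tuple} (hf : Generic f) : CondI f :=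
  forall_zmod_three hf.h0_pos hf.h1_pos hf.h2_pos

theorem Generic.sigmaRaw {f : Tuple} (hf : Generic f) : Generic (sigmaRaw f) := by
  obtain ⟨_, _, _, _, _, _, _⟩ := hf
  unfold GMN.sigmaRaw
  split_ifs <;> constructor <;> dsimp only <;> omega

/-- The label at the other end of the colour-2 arc, for labels on the circle `0`. -/
def proj (f : Tuple) (p : ZMod 3 × ℤ) : ZMod 3 × ℤ :=
  if p.1 = 0 then
    if p.2 % (f.h2 + f.h0) < f.h0 then (1, -(p.2 % (f.h2 + f.h0)) - 1)
    else (2, f.h2 + f.h0 - p.2 % (f.h2 + f.h0) - 1)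
  else p

/-- The translation of labels on the circle `1` and the reflection of labels on the circle `2`
that carry arcs of `f` to paths of `sigmaRaw f`. -/
def move (f : Tuple) (p : ZMod 3 × ℤ) : ZMod 3 × ℤ :=
  if p.1 = 1 then (1, p.2 + min f.q0 f.h0) else (2, f.q2 + f.q0 - min f.q0 f.h0 - 1 - p.2)

theorem proj_one (f : Tuple) (x : ℤ) : proj f (1, x) = (1, x) :=
  if_neg (show (1 : ZMod 3) ≠ 0 by decide)

theorem proj_two (f : Tuple) (x : ℤ) : proj f (2, x) = (2, x) :=
  if_neg (show (2 : ZMod 3) ≠ 0 by decide)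

theorem proj_zero_lt {f : Tuple} (hf : Generic f) {x : ℤ} (m : ℤ)
    (h : 0 ≤ x + m * (f.h2 + f.h0)) (h' : x + m * (f.h2 + f.h0) < f.h0) :
    proj f (0, x) = (1, -(x + m * (f.h2 + f.h0)) - 1) := by
  have : x % (f.h2 + f.h0) = x + m * (f.h2 + f.h0) := by
    rw [← Int.add_mul_emod_self_right x m, Int.emod_eq_of_lt h (by have := hf.h2_pos; omega)]
  simp [proj, this, h']

theorem proj_zero_ge {f : Tuple} (hf : Generic f) {x : ℤ} (m : ℤ)
    (h : f.h0 ≤ x + m * (f.h2 + f.h0)) (h' : x + m * (f.h2 + f.h0) < f.h2 + f.h0) :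
    proj f (0, x) = (2, f.h2 + f.h0 - (x + m * (f.h2 + f.h0)) - 1) := by
  have : x % (f.h2 + f.h0) = x + m * (f.h2 + f.h0) := by
    rw [← Int.add_mul_emod_self_right x m, Int.emod_eq_of_lt (by have := hf.h0_pos; omega) h']
  simp [proj, this, h]

theorem move_one (f : Tuple) (x : ℤ) : move f (1, x) = (1, x + min f.q0 f.h0) := rfl

theorem move_two (f : Tuple) (x : ℤ) :
    move f (2, x) = (2, f.q2 + f.q0 - min f.q0 f.h0 - 1 - x) :=
  if_neg (show (2 : ZMod 3) ≠ 1 by decide)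

theorem linked_proj {f : Tuple} (hf : Generic f) (p : ZMod 3 × ℤ) : Linked f p (proj f p) := by
  obtain ⟨i, x⟩ := p
  revert i
  refine forall_zmod_three ?_ ?_ ?_
  · have hL : 0 < f.h2 + f.h0 := by have := hf.h0_pos; have := hf.h2_pos; omega
    refine (Linked.emod 0 x).trans ?_
    rw [twol_zero]
    have h0 := Int.emod_nonneg x hL.ne'
    have h1 := Int.emod_lt_of_pos x hL
    simp only [proj, if_true]
    split_ifs with h
    · exact .rel _ _ (.two 0 _ h0 h)
    · refine ((Linked.two_two_zero 0 ?_ ?_).trans (Linked.shift_zero 1 ?_)).symm <;> omega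
  · rw [proj_one]; exact .refl _
  · rw [proj_two]; exact .refl _

theorem proj_fst_ne_zero (f : Tuple) (p : ZMod 3 × ℤ) :
    (∃ x, proj f p = (1, x)) ∨ ∃ x, proj f p = (2, x) := by
  obtain ⟨i, x⟩ := p
  revert i
  refine forall_zmod_three ?_ ?_ ?_
  · simp only [proj, if_true]
    split_ifs
    · exact Or.inl ⟨_, rfl⟩
    · exact Or.inr ⟨_, rfl⟩
  · exact Or.inl ⟨x, proj_one f x⟩
  · exact Or.inr ⟨x, proj_two f x⟩

theorem sigmaRaw_cases {f : Tuple} (hf : Generic f) :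
    (f.q0 < f.h0 ∧ f.q0 < f.h2 ∧ sigmaRaw f =
      ⟨f.h0 + f.h1 - f.q0, f.q0, f.h2 + f.h1 - f.q0,
        f.h0 + f.h1 + f.h2 - 2 * f.q0, f.q0 + f.q1 + f.h1, f.q0 + f.q2 + f.h1⟩) ∨
    (f.h0 < f.q0 ∧ f.h2 < f.q0 ∧ sigmaRaw f =
      ⟨f.q0 + f.h1 - f.h2, f.h0 + f.h2 - f.q0, f.q0 + f.h1 - f.h0,
        f.h1, f.q0 + f.q1 - f.h2, f.q0 + f.q2 - f.h0⟩) ∨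
    (f.h0 < f.q0 ∧ f.q0 < f.h2 ∧ sigmaRaw f =
      ⟨f.h1, f.h0, f.h1 + f.h2 - f.h0, f.h1 + f.h2 - f.q0, f.q1,
        2 * f.q0 + f.q2 + f.h1 - f.h0⟩) ∨
    (f.h2 < f.q0 ∧ f.q0 < f.h0 ∧ sigmaRaw f =
      ⟨f.h1 + f.h0 - f.h2, f.h2, f.h1, f.h1 + f.h0 - f.q0,
        2 * f.q0 + f.q1 + f.h1 - f.h2, f.q2⟩) := by
  obtain ⟨_, _, _, _, _, _, _⟩ := hf
  unfold sigmaRaw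
  split_ifs with h1 h2 h3
  · exact Or.inl ⟨h1.1, h1.2, rfl⟩
  · exact Or.inr (Or.inl ⟨h2.1, h2.2, rfl⟩)
  · exact Or.inr (Or.inr (Or.inl ⟨by omega, h3, rfl⟩))
  · exact Or.inr (Or.inr (Or.inr ⟨by omega, by omega, rfl⟩))

theorem linked_move_two_one {f : Tuple} (hf : Generic f) {j : ℤ}
    (h0 : 0 ≤ j) (h1 : j < f.h1) :
    Linked (sigmaRaw f) (move f (1, j)) (move f (2, -j - 1)) := by
  rw [move_one, move_two]
  obtain ⟨_, _, _, _, _, _, _⟩ := id hf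
  rcases sigmaRaw_cases hf with ⟨_, _, e⟩ | ⟨_, _, e⟩ | ⟨_, _, e⟩ | ⟨_, _, e⟩ <;> rw [e]
  · apply Linked.via_two_three 1 1 0 <;> dsimp only <;> omega
  · apply Linked.via_two_three 1 0 0 <;> dsimp only <;> omega
  · apply Linked.via_two_three 1 1 0 <;> dsimp only <;> omega
  · apply Linked.via_two_three 1 0 0 <;> dsimp only <;> omega

theorem linked_move_three_one {f : Tuple} (hf : Generic f) {j : ℤ}
    (h0 : 0 ≤ j) (h1 : j < f.h1) :
    Linked (sigmaRaw f) (move f (1, j + f.q1)) (move f (2, -j - 1 + f.q2)) := by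
  rw [move_one, move_two]
  obtain ⟨_, _, _, _, _, _, _⟩ := id hf
  rcases sigmaRaw_cases hf with ⟨_, _, e⟩ | ⟨_, _, e⟩ | ⟨_, _, e⟩ | ⟨_, _, e⟩ <;> rw [e]
  · apply Linked.via_three_two 0 0 1 <;> dsimp only <;> omega
  · apply Linked.via_three_two 1 0 1 <;> dsimp only <;> omega
  · apply Linked.via_three_two 1 0 1 <;> dsimp only <;> omega
  · apply Linked.via_three_two 0 0 1 <;> dsimp only <;> omega

theorem linked_move_three_zero {f : Tuple} (hf : Generic f) {j : ℤ}
    (h0 : 0 ≤ j) (h1 : j < f.h0) :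
    Linked (sigmaRaw f) (move f (proj f (0, j + f.q0))) (move f (1, -j - 1 + f.q1)) := by
  obtain ⟨_, _, _, _, _, _, _⟩ := id hf
  rw [move_one]
  rcases lt_or_ge (j + f.q0) f.h0 with hj | hj
  · rw [proj_zero_lt hf 0 (by omega) (by omega), move_one]
    rcases sigmaRaw_cases hf with ⟨_, _, e⟩ | ⟨_, _, e⟩ | ⟨_, _, e⟩ | ⟨_, _, e⟩ <;> rw [e]
    · apply Linked.via_one_one 0 0 (-1) <;> dsimp only <;> omega
    · omega
    · omega
    · apply Linked.via_one_one 0 0 (-1) <;> dsimp only <;> omega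
  rcases lt_or_ge (j + f.q0) (f.h2 + f.h0) with hj' | hj'
  · rw [proj_zero_ge hf 0 (by omega) (by omega), move_two]
    refine Linked.symm ?_
    rcases sigmaRaw_cases hf with ⟨_, _, e⟩ | ⟨_, _, e⟩ | ⟨_, _, e⟩ | ⟨_, _, e⟩ <;> rw [e]
    · apply Linked.three_one_two 1 (-1) <;> dsimp only <;> omega
    · apply Linked.three_one_two 0 0 <;> dsimp only <;> omega
    · apply Linked.three_one_two 0 (-1) <;> dsimp only <;> omega
    · apply Linked.three_one_two 1 0 <;> dsimp only <;> omega
  · rw [proj_zero_lt hf (-1) (by omega) (by omega), move_one]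
    rcases sigmaRaw_cases hf with ⟨_, _, e⟩ | ⟨_, _, e⟩ | ⟨_, _, e⟩ | ⟨_, _, e⟩ <;> rw [e]
    · omega
    · apply Linked.via_one_one 1 0 0 <;> dsimp only <;> omega
    · omega
    · apply Linked.via_one_one 1 (-1) 0 <;> dsimp only <;> omega

theorem linked_move_three_two {f : Tuple} (hf : Generic f) {j : ℤ}
    (h0 : 0 ≤ j) (h1 : j < f.h2) :
    Linked (sigmaRaw f) (move f (2, j + f.q2)) (move f (proj f (0, -j - 1 + f.q0))) := by
  obtain ⟨_, _, _, _, _, _, _⟩ := id hf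
  rw [move_two]
  rcases lt_or_ge (-j - 1 + f.q0) 0 with hj | hj
  · rw [proj_zero_ge hf 1 (by omega) (by omega), move_two]
    rcases sigmaRaw_cases hf with ⟨_, _, e⟩ | ⟨_, _, e⟩ | ⟨_, _, e⟩ | ⟨_, _, e⟩ <;> rw [e]
    · apply Linked.via_two_two 1 1 (-1) <;> dsimp only <;> omega
    · omega
    · apply Linked.via_two_two 1 1 (-1) <;> dsimp only <;> omega
    · omega
  rcases lt_or_ge (-j - 1 + f.q0) f.h0 with hj' | hj'
  · rw [proj_zero_lt hf 0 (by omega) (by omega), move_one]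
    refine Linked.symm ?_
    rcases sigmaRaw_cases hf with ⟨_, _, e⟩ | ⟨_, _, e⟩ | ⟨_, _, e⟩ | ⟨_, _, e⟩ <;> rw [e] <;>
      apply Linked.two_one_two 0 0 <;> simp only [zero_mul, add_zero] <;> omega
  · rw [proj_zero_ge hf 0 (by omega) (by omega), move_two]
    rcases sigmaRaw_cases hf with ⟨_, _, e⟩ | ⟨_, _, e⟩ | ⟨_, _, e⟩ | ⟨_, _, e⟩ <;> rw [e]
    · omega
    · apply Linked.via_two_two 0 1 0 <;> dsimp only <;> omega
    · apply Linked.via_two_two 0 2 0 <;> dsimp only <;> omega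
    · omega

theorem Linked.move_proj {f : Tuple} (hf : Generic f) {a b : ZMod 3 × ℤ}
    (h : Linked f a b) :
    Linked (sigmaRaw f) (move f (proj f a)) (move f (proj f b)) := by
  obtain ⟨_, _, _, _, _, _, _⟩ := id hf
  refine eqvGen_lift (linked_equivalence _) (fun p => move f (proj f p)) ?_ h
  rintro _ _ (⟨i, j⟩ | ⟨i, j, h0, h1⟩ | ⟨i, j, h0, h1⟩)
  · revert i
    refine forall_zmod_three ?_ ?_ ?_
    · simpa [proj, twol_zero] using refl _
    · rw [proj_one, proj_one, move_one, move_one, twol_one]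
      apply shift_one 1
      rcases sigmaRaw_cases hf with ⟨_, _, e⟩ | ⟨_, _, e⟩ | ⟨_, _, e⟩ | ⟨_, _, e⟩ <;> rw [e] <;>
        dsimp only <;> omega
    · rw [proj_two, proj_two, move_two, move_two, twol_two]
      apply shift_two (-1)
      rcases sigmaRaw_cases hf with ⟨_, _, e⟩ | ⟨_, _, e⟩ | ⟨_, _, e⟩ | ⟨_, _, e⟩ <;> rw [e] <;>
        dsimp only <;> omega
  · revert i
    refine forall_zmod_three (fun h1 => ?_) (fun h1 => ?_) (fun h1 => ?_)
    · rw [h_zero] at h1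
      change Linked _ _ (move f (proj f (1, _)))
      rw [proj_zero_lt hf 0 (by omega) (by omega), proj_one, zero_mul, add_zero]
      exact refl _
    · change Linked _ _ (move f (proj f (2, _)))
      rw [proj_one, proj_two]
      exact linked_move_two_one hf h0 h1
    · rw [h_two] at h1
      change Linked _ _ (move f (proj f (0, _)))
      rw [proj_two, proj_zero_ge hf 1 (by omega) (by omega)]
      convert refl _ using 3
      omega
  · revert i
    refine forall_zmod_three (fun h1 => ?_) (fun h1 => ?_) (fun h1 => ?_)
    · change Linked _ _ (move f (proj f (1, -j - 1 + f.q1)))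
      rw [proj_one]
      exact linked_move_three_zero hf h0 h1
    · change Linked _ _ (move f (proj f (2, -j - 1 + f.q2)))
      rw [proj_one, proj_two]
      exact linked_move_three_one hf h0 h1
    · change Linked _ _ (move f (proj f (0, -j - 1 + f.q0)))
      rw [proj_two]
      exact linked_move_three_two hf h0 h1

/-- `sigmaRaw` is an involution, up to the residues of the `q`-entries. -/
theorem sigmaRaw_sigmaRaw_h {f : Tuple} (hf : Generic f) : (sigmaRaw (sigmaRaw f)).h = f.h := by
  obtain ⟨_, _, _, _, _, _, _⟩ := id hf
  funext i
  revert i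
  rcases sigmaRaw_cases hf with ⟨_, _, e⟩ | ⟨_, _, e⟩ | ⟨_, _, e⟩ | ⟨_, _, e⟩ <;>
  rcases sigmaRaw_cases hf.sigmaRaw with ⟨_, _, e'⟩ | ⟨_, _, e'⟩ | ⟨_, _, e'⟩ | ⟨_, _, e'⟩ <;>
  rw [e'] <;> simp only [e] at * <;> refine forall_zmod_three ?_ ?_ ?_ <;>
  simp only [h_zero, h_one, h_two] <;> omega

theorem sigmaRaw_sigmaRaw_q {f : Tuple} (hf : Generic f)
    (i : ZMod 3) :
    ∃ m, f.q i = (sigmaRaw (sigmaRaw f)).q i + m * (sigmaRaw (sigmaRaw f)).twol i := by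
  have ht : (sigmaRaw (sigmaRaw f)).twol = f.twol := by
    funext i
    simp [Tuple.twol, sigmaRaw_sigmaRaw_h hf]
  rw [ht]
  have key : ∀ i, f.q i = (sigmaRaw (sigmaRaw f)).q i ∨
      f.q i = (sigmaRaw (sigmaRaw f)).q i - f.twol i ∨
      f.q i = (sigmaRaw (sigmaRaw f)).q i - 2 * f.twol i := by
    obtain ⟨_, _, _, _, _, _, _⟩ := id hf
    rcases sigmaRaw_cases hf with ⟨_, _, e⟩ | ⟨_, _, e⟩ | ⟨_, _, e⟩ | ⟨_, _, e⟩ <;>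
    rcases sigmaRaw_cases hf.sigmaRaw with ⟨_, _, e'⟩ | ⟨_, _, e'⟩ | ⟨_, _, e'⟩ | ⟨_, _, e'⟩ <;>
    rw [e'] <;> simp only [e] at * <;> refine forall_zmod_three ?_ ?_ ?_ <;>
    simp only [q_zero, q_one, q_two, twol_zero, twol_one, twol_two, true_or] <;> omega
  rcases key i with h | h | h
  exacts [⟨0, by rw [h]; ring⟩, ⟨-1, by rw [h]; ring⟩, ⟨-2, by rw [h]; ring⟩]

theorem linked_move_move {f : Tuple} (hf : Generic f)
    (p : ZMod 3 × ℤ) :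
    Linked f (move (sigmaRaw f) (proj (sigmaRaw f) (move f (proj f p)))) p := by
  refine Linked.trans ?_ (linked_proj hf p).symm
  obtain ⟨_, _, _, _, _, _, _⟩ := id hf
  rcases proj_fst_ne_zero f p with ⟨x, hx⟩ | ⟨x, hx⟩ <;> rw [hx]
  · rw [move_one, proj_one, move_one]
    apply Linked.shift_one (-1)
    rcases sigmaRaw_cases hf with ⟨_, _, e⟩ | ⟨_, _, e⟩ | ⟨_, _, e⟩ | ⟨_, _, e⟩ <;> rw [e] <;>
      dsimp only <;> omega
  · rw [move_two, proj_two, move_two]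
    rcases sigmaRaw_cases hf with ⟨_, _, e⟩ | ⟨_, _, e⟩ | ⟨_, _, e⟩ | ⟨_, _, e⟩ <;> rw [e] <;>
      first
      | apply Linked.shift_two 0; dsimp only; omega
      | apply Linked.shift_two (-1); dsimp only; omega

theorem threeClasses_sigmaRaw {f : Tuple} (hf : Generic f)
    (h : ThreeClasses Set.univ (Linked f)) :
    ThreeClasses Set.univ (Linked (sigmaRaw f)) := by
  refine h.transfer (linked_equivalence _) (linked_equivalence _) (fun p => move f (proj f p))
    (fun p => move (sigmaRaw f) (proj (sigmaRaw f) p)) (fun _ _ => Set.mem_univ _)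
    (fun _ _ h => h.move_proj hf)
    (fun _ _ h => (h.move_proj hf.sigmaRaw).congr_q (sigmaRaw_sigmaRaw_h hf)
      (sigmaRaw_sigmaRaw_q hf))
    (fun p _ => linked_move_move hf p) (fun p _ => ?_)
  have hp := linked_proj hf.sigmaRaw p
  rcases proj_fst_ne_zero (sigmaRaw f) p with ⟨x, hx⟩ | ⟨x, hx⟩ <;> rw [hx] at hp
  · refine ⟨(1, x - min f.q0 f.h0), Set.mem_univ _, ?_⟩
    rw [proj_one, move_one, sub_add_cancel]
    exact hp.symm
  · refine ⟨(2, f.q2 + f.q0 - min f.q0 f.h0 - 1 - x), Set.mem_univ _, ?_⟩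
    rw [proj_two, move_two, sub_sub_cancel]
    exact hp.symm

theorem reduceQ_q (f : Tuple) (i : ZMod 3) :
    (reduceQ f).q i = f.q i % f.twol i := by
  revert i
  exact forall_zmod_three rfl rfl rfl

theorem threeClasses_reduceQ {f : Tuple}
    (h : ThreeClasses Set.univ (Linked f)) :
    ThreeClasses Set.univ (Linked (reduceQ f)) := by
  have hq : ∀ i, (reduceQ f).q i = f.q i + -(f.q i / f.twol i) * f.twol i := fun i => by
    rw [reduceQ_q, Int.emod_def]; ring
  refine h.transfer (linked_equivalence f) (linked_equivalence (reduceQ f)) id id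
    (fun _ _ => Set.mem_univ _)
    (fun _ _ h => Linked.congr_q (f := f) (g := reduceQ f) rfl (fun i => ⟨_, hq i⟩) h)
    (fun _ _ h => Linked.congr_q (f := reduceQ f) (g := f) rfl
      (fun i => ⟨f.q i / f.twol i, ?_⟩) h)
    (fun _ _ => .refl _) (fun b _ => ⟨b, Set.mem_univ b, .refl _⟩)
  rw [hq]
  change _ = _ + _ * f.twol i
  ring

theorem admissible_reduceQ {f : Tuple} (hI : CondI f) (hII : CondII f) (hIV : CondIV f)
    (hV : CondV f) (h : ThreeClasses Set.univ (Linked f)) : Admissible (reduceQ f) := by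
  have hpar : ∀ i, (reduceQ f).q i % 2 = f.q i % 2 := fun i => by
    rw [reduceQ_q, Int.emod_emod_of_dvd]
    have := hII (i - 1) i
    simp only [Tuple.twol]
    omega
  refine ⟨⟨hI, hII, fun i => ?_, fun i j => ?_⟩, fun i => ?_,
    (threeOrbits_iff (f := reduceQ f) hI).2 (threeClasses_reduceQ h)⟩
  · rw [reduceQ_q]
    exact ⟨Int.emod_nonneg _ (twol_pos hI i).ne', Int.emod_lt_of_pos _ (twol_pos hI i)⟩
  · rw [hpar, hpar, hIV i j]
  · rw [Int.add_emod, hpar, ← Int.add_emod]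
    exact hV i

/-- if `f` is admissible with `q₀ ≠ 0`, then the 6-tuple `f′ = σ(f)`
obtained by the 2-symmetric transformation is admissible. -/
theorem stmt_6 (f : Tuple) (hf : Admissible f) (hq0 : f.q0 ≠ 0) :
    Admissible (sigma f) := by
  obtain ⟨⟨hI, hII, hIII, hIV⟩, hV, hVI⟩ := hf
  have p0 : 0 < f.h0 := hI 0
  have p1 : 0 < f.h1 := hI 1
  have p2 : 0 < f.h2 := hI 2
  obtain ⟨r0, r0'⟩ : 0 ≤ f.q0 ∧ f.q0 < f.h2 + f.h0 := hIII 0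
  have e1 : f.h0 % 2 = f.h1 % 2 := hII 0 1
  have e2 : f.h0 % 2 = f.h2 % 2 := hII 0 2
  have e3 : f.q0 % 2 = f.q1 % 2 := hIV 0 1
  have e4 : f.q0 % 2 = f.q2 % 2 := hIV 0 2
  have e5 : (f.h0 + f.q0) % 2 = 1 := hV 0
  have hg : Generic f := ⟨p0, p1, p2, by omega, r0', by omega, by omega⟩
  have hpar : ∀ i, (sigmaRaw f).h i % 2 = (sigmaRaw f).h 0 % 2 ∧
      (sigmaRaw f).q i % 2 = ((sigmaRaw f).h 0 + 1) % 2 := by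
    clear p0 p1 p2 r0 r0'
    rcases sigmaRaw_cases hg with ⟨-, -, e⟩ | ⟨-, -, e⟩ | ⟨-, -, e⟩ | ⟨-, -, e⟩ <;> rw [e] <;>
      refine forall_zmod_three ?_ ?_ ?_ <;>
      simp only [h_zero, h_one, h_two, q_zero, q_one, q_two, true_and] <;> omega
  rw [sigma_eq_reduceQ hq0]
  refine admissible_reduceQ hg.sigmaRaw.condI (fun i j => ?_) (fun i j => ?_) (fun i => ?_)
    (threeClasses_sigmaRaw hg ((threeOrbits_iff hI).1 hVI))
  · rw [(hpar i).1, (hpar j).1]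
  · rw [(hpar i).2, (hpar j).2]
  · have := hpar i
    omega

end GMN
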